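/- Let n = 2k+1 with k ≥ 0 and let X be an n×n complex cross matrix. Then the characteristic polynomial of X factors as det(λI − X) = (λ − X k k) · ∏_{i=0}^{k-1} ( (λ − X i i)(λ − X (n-1-i) (n-1-i)) − X i (n-1-i) · X (n-1-i) i ), as an identity of polynomials in λ. -/

import Mathlib

open Polynomial

/-- An `n × n` complex matrix is a *cross matrix* if its nonzero entries lie
only on the main diagonal and the anti-diagonal (0-based indices). -/
def IsCrossMatrix {n : ℕ} (X : Matrix (Fin n) (Fin n) ℂ) : Prop :=
  ∀ i j : Fin n, j ≠ i → (i : ℕ) + (j : ℕ) + 1 ≠ n → X i j = 0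

theorem self_lt_two_mul_add_one (k : ℕ) : k < 2 * k + 1 := by
  omega

theorem self_le_two_mul_add_one (k : ℕ) : k ≤ 2 * k + 1 :=
  (self_lt_two_mul_add_one k).le

/-- The enumeration of `Fin (2 * k + 1)` listing first the central index `k` and then the pairs
`{i, 2 * k - i}` for `i < k`. -/
def crossIndex (k : ℕ) : Unit ⊕ (Fin 2 × Fin k) → Fin (2 * k + 1)
  | Sum.inl _ => ⟨k, self_lt_two_mul_add_one k⟩
  | Sum.inr (b, i) =>
    if b = 0 then Fin.castLE (self_le_two_mul_add_one k) i
    else (Fin.castLE (self_le_two_mul_add_one k) i).rev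

theorem crossIndex_bijective (k : ℕ) : Function.Bijective (crossIndex k) := by
  rw [Fintype.bijective_iff_injective_and_card]
  refine ⟨?_, by simp [add_comm]⟩
  rintro (_ | ⟨b, i⟩) (_ | ⟨c, j⟩) h
  · rfl
  · fin_cases c <;> simp [crossIndex, Fin.ext_iff] at h <;> omega
  · fin_cases b <;> simp [crossIndex, Fin.ext_iff] at h <;> omega
  · fin_cases b <;> fin_cases c <;> simp [crossIndex, Fin.ext_iff] at h ⊢ <;> omega

theorem IsCrossMatrix.charmatrix_eq_zero {n : ℕ} {X : Matrix (Fin n) (Fin n) ℂ}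
    (hX : IsCrossMatrix X) {i j : Fin n} (hij : j ≠ i) (h : (i : ℕ) + (j : ℕ) + 1 ≠ n) :
    X.charmatrix i j = 0 := by
  rw [Matrix.charmatrix_apply_ne _ _ _ hij.symm, hX i j hij h, C_0, neg_zero]

theorem IsCrossMatrix.charmatrix_submatrix_crossIndex {k : ℕ}
    {X : Matrix (Fin (2 * k + 1)) (Fin (2 * k + 1)) ℂ} (hX : IsCrossMatrix X) :
    X.charmatrix.submatrix (crossIndex k) (crossIndex k) =
      Matrix.fromBlocks
        (X.charmatrix.submatrix (fun u : Unit => crossIndex k (Sum.inl u))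
          (fun u => crossIndex k (Sum.inl u))) 0 0
        (Matrix.blockDiagonal fun i =>
          X.charmatrix.submatrix (fun b => crossIndex k (Sum.inr (b, i)))
            (fun b => crossIndex k (Sum.inr (b, i)))) := by
  ext1 (_ | ⟨b, i⟩) (_ | ⟨c, j⟩)
  · rfl
  · refine hX.charmatrix_eq_zero ?_ ?_ <;> fin_cases c <;> simp [crossIndex, Fin.ext_iff] <;> omega
  · refine hX.charmatrix_eq_zero ?_ ?_ <;> fin_cases b <;> simp [crossIndex, Fin.ext_iff] <;> omega
  · rw [Matrix.fromBlocks_apply₂₂, Matrix.blockDiagonal_apply]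
    split_ifs with hij
    · subst hij
      rfl
    · have hij' : (i : ℕ) ≠ j := Fin.val_ne_of_ne hij
      refine hX.charmatrix_eq_zero ?_ ?_ <;> fin_cases b <;> fin_cases c <;>
        simp [crossIndex, Fin.ext_iff] <;> omega

/-- The characteristic polynomial `det (λ I - X)` of an odd-order cross matrix
(`n = 2k + 1`) factors into the linear factor `λ - X k k` times `k` quadratics.
Here for `i < k` the index `n - 1 - i` is `(Fin.castLE _ i).rev`. -/
theorem crossMatrix_charpoly_odd (k : ℕ)
    (X : Matrix (Fin (2 * k + 1)) (Fin (2 * k + 1)) ℂ) (hX : IsCrossMatrix X) :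
    X.charpoly =
      (Polynomial.X - C (X ⟨k, by omega⟩ ⟨k, by omega⟩)) *
        ∏ i : Fin k,
          ((Polynomial.X - C (X (Fin.castLE (by omega) i) (Fin.castLE (by omega) i))) *
              (Polynomial.X -
                C (X (Fin.castLE (by omega) i).rev (Fin.castLE (by omega) i).rev)) -
            C (X (Fin.castLE (by omega) i) (Fin.castLE (by omega) i).rev) *
              C (X (Fin.castLE (by omega) i).rev (Fin.castLE (by omega) i))) := by
  rw [Matrix.charpoly, ← Matrix.det_submatrix_equiv_self
    (Equiv.ofBijective _ (crossIndex_bijective k)), Equiv.coe_ofBijective,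
    hX.charmatrix_submatrix_crossIndex, Matrix.det_fromBlocks_zero₂₁, Matrix.det_blockDiagonal,
    Matrix.det_unique]
  congr 1
  · simp [Matrix.charmatrix_apply_eq, crossIndex]
  · refine Finset.prod_congr rfl fun i _ => ?_
    have hne : (Fin.castLE (by omega) i : Fin (2 * k + 1)) ≠ (Fin.castLE (by omega) i).rev := by
      simp only [ne_eq, Fin.ext_iff, Fin.val_rev, Fin.val_castLE]
      omega
    simp [Matrix.det_fin_two, crossIndex, Matrix.charmatrix_apply_eq,
      Matrix.charmatrix_apply_ne _ _ _ hne, Matrix.charmatrix_apply_ne _ _ _ hne.symm]
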